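/- Let S = {i_1 < i_2 < ⋯ < i_{2r}} ⊆ {1,…,n} be a nonempty subset of even size 2r. For 1 ≤ m ≤ r define w_m := s_n · (s_{n−2} s_{n−3} ⋯ s_{i_{2m−1}}) · (s_{n−1} s_{n−2} ⋯ s_{i_{2m}}), where the first decreasing run is empty if i_{2m−1} > n−2 and the second is empty if i_{2m} > n−1, and set u := w_1 w_2 ⋯ w_r ∈ W. Then: (a) I_u = S; (b) u sends the elements of {1,…,n}∖S, listed in increasing order, to 1, 2, …, n−2r respectively, and sends i_m to 2n−m+1 for each 1 ≤ m ≤ 2r; and (c) setting L := r + Σ_{m=1}^{r} ((n−1−i_{2m−1}) + (n−i_{2m})), the given word for u has exactly L letters, and every expression of any v ∈ W with I_v = S as a product of elements of {s_1,…,s_n} has at least L factors. In particular, the given word is a reduced expression for the minimal-length coset representative of W_{[n−1]}\W corresponding to S. -/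

import Mathlib

noncomputable section

open Matrix

/-- `N = n(n-1)/2`, the number of parameters. -/
def Npar (n : ℕ) : ℕ := n * (n - 1) / 2

/-- The decreasing run `a, a-1, …, b` (empty if `b > a`). -/
def decRun (a b : ℕ) : List ℕ := (List.range' b (a + 1 - b)).reverse

/-- The index sequence `(i_1, …, i_N)`: for `m = 1, …, ⌊n/2⌋` (here `m` is 0-based, so
`m+1` is the 1-based block index), concatenate `n`, the run `n-2, …, 2(m+1)-1`, and the
run `n-1, …, 2(m+1)`. -/
def wordD (n : ℕ) : List ℕ :=
  ((List.range (n / 2)).map (fun m =>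
    n :: (decRun (n - 2) (2 * m + 1) ++ decRun (n - 1) (2 * m + 2)))).flatten

/-- The matrix `x_i(t)` (index `i` is 1-based, matrix positions are 1-based in the paper,
0-based here). -/
def xMat (n : ℕ) (i : ℕ) (t : ℝ) : Matrix (Fin (2 * n)) (Fin (2 * n)) ℝ :=
  Matrix.of fun p q =>
    (if (p : ℕ) = (q : ℕ) then 1 else 0) +
    (if i < n then
        (if (p : ℕ) + 1 = i ∧ (q : ℕ) + 1 = i + 1 then t else 0)
      + (if (p : ℕ) + 1 = n + i + 1 ∧ (q : ℕ) + 1 = n + i then -t else 0)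
     else
        (if (p : ℕ) + 1 = n - 1 ∧ (q : ℕ) + 1 = 2 * n then t else 0)
      + (if (p : ℕ) + 1 = n ∧ (q : ℕ) + 1 = 2 * n - 1 then -t else 0))

/-- The product `x_{i_1}(t_1) ⋯ x_{i_N}(t_N)`; the parameter `t l` plays the role of
`t_{l+1}`. -/
def prodX (n : ℕ) (t : ℕ → ℝ) : Matrix (Fin (2 * n)) (Fin (2 * n)) ℝ :=
  ((List.range (Npar n)).map (fun l => xMat n ((wordD n).getD l 0) (t l))).prod

/-- The first block `X₁(t)` of the first `n` rows of the product. -/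
def X1 (n : ℕ) (t : ℕ → ℝ) : Matrix (Fin n) (Fin n) ℝ :=
  Matrix.of fun p q =>
    prodX n t ⟨(p : ℕ), by have := p.isLt; omega⟩ ⟨(q : ℕ), by have := q.isLt; omega⟩

/-- The second block `X₂(t)` of the first `n` rows of the product. -/
def X2 (n : ℕ) (t : ℕ → ℝ) : Matrix (Fin n) (Fin n) ℝ :=
  Matrix.of fun p q =>
    prodX n t ⟨(p : ℕ), by have := p.isLt; omega⟩ ⟨n + (q : ℕ), by have := q.isLt; omega⟩

/-- The skew-symmetric matrix `A(t) = X₁(t)⁻¹ · X₂(t)`. -/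
def Amat (n : ℕ) (t : ℕ → ℝ) : Matrix (Fin n) (Fin n) ℝ := (X1 n t)⁻¹ * X2 n t

/-- The set `S_n^{>0}` of totally positive skew-symmetric matrices. -/
def Spos (n : ℕ) : Set (Matrix (Fin n) (Fin n) ℝ) :=
  { A | ∃ t : ℕ → ℝ, (∀ i < Npar n, 0 < t i) ∧ A = Amat n t }

/-- The signed minor `M_{j,k}(A)`: `(-1)^{jk}` times the determinant of the submatrix of `A`
with (1-based) rows `{1,…,n-k-1} ∪ {n-k+j,…,n}` and columns `{1,…,n-j}`. -/
def Mminor (n j k : ℕ) (A : Matrix (Fin n) (Fin n) ℝ) : ℝ :=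
  (-1 : ℝ) ^ (j * k) *
    Matrix.det (Matrix.of fun (p q : Fin (n - j)) =>
      A (if (p : ℕ) < n - k - 1
          then ⟨(p : ℕ), by have := p.isLt; omega⟩
          else ⟨(p : ℕ) + j, by have := p.isLt; omega⟩)
        ⟨(q : ℕ), by have := q.isLt; omega⟩)

/-- The Pfaffian of an `m × m` matrix (intended for `m` even):
`Pf(B) = (1/(2^{m/2} (m/2)!)) Σ_σ sgn(σ) Π_i B_{σ(2i-1), σ(2i)}`. -/
def Pfaff {m : ℕ} (B : Matrix (Fin m) (Fin m) ℝ) : ℝ :=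
  (1 / ((2 : ℝ) ^ (m / 2) * (Nat.factorial (m / 2) : ℝ))) *
    ∑ σ : Equiv.Perm (Fin m), ((Equiv.Perm.sign σ : ℤ) : ℝ) *
      ∏ i : Fin (m / 2),
        B (σ ⟨2 * (i : ℕ), by have := i.isLt; omega⟩)
          (σ ⟨2 * (i : ℕ) + 1, by have := i.isLt; omega⟩)

/-- `Pf_I(A)`: the Pfaffian of the submatrix of `A` with rows and columns indexed by `I`
in increasing order. -/
def PfI {n : ℕ} (A : Matrix (Fin n) (Fin n) ℝ) (I : Finset (Fin n)) : ℝ :=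
  Pfaff (Matrix.of fun (p q : Fin I.card) =>
    A ((I.orderIsoOfFin rfl p : Fin n)) ((I.orderIsoOfFin rfl q : Fin n)))

/-- `sgn(I,[n]) = (-1)^{(Σ_{i∈I} i) - |I|(|I|+1)/2}` (the elements of `I` are 1-based, so a
0-based element `i` contributes `i+1`; the natural subtraction agrees with the integer one
since the sum of `|I|` distinct positive integers is at least `|I|(|I|+1)/2`). -/
def sgnSet {n : ℕ} (I : Finset (Fin n)) : ℝ :=
  (-1 : ℝ) ^ ((∑ i ∈ I, ((i : ℕ) + 1)) - I.card * (I.card + 1) / 2)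

/-- The block matrix `[Id_n | A]`. -/
def IdA {n : ℕ} (A : Matrix (Fin n) (Fin n) ℝ) : Matrix (Fin n) (Fin (2 * n)) ℝ :=
  Matrix.of fun p q =>
    if h : (q : ℕ) < n then (if (p : ℕ) = (q : ℕ) then 1 else 0)
    else A p ⟨(q : ℕ) - n, by have := q.isLt; omega⟩

/-- The full word `(j_1, …, j_{2N})`: `1, 2,1, 3,2,1, …, n-1,…,1` followed by `(i_1,…,i_N)`. -/
def wordFull (n : ℕ) : List ℕ :=
  (((List.range n).map (fun r => decRun r 1)).flatten) ++ wordD n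

/-- `z(ε) = x_{j_1}(ε) ⋯ x_{j_{2N}}(ε)`. -/
def zeps (n : ℕ) (ε : ℝ) : Matrix (Fin (2 * n)) (Fin (2 * n)) ℝ :=
  ((wordFull n).map (fun i => xMat n i ε)).prod

/-- `Z(ε) = z(ε)ᵀ · z(ε)`. -/
def Zeps (n : ℕ) (ε : ℝ) : Matrix (Fin (2 * n)) (Fin (2 * n)) ℝ :=
  (zeps n ε)ᵀ * zeps n ε

/-- First block `Y₁(ε)` of `[Id_n | A] · Z(ε)`. -/
def Y1 {n : ℕ} (A : Matrix (Fin n) (Fin n) ℝ) (ε : ℝ) : Matrix (Fin n) (Fin n) ℝ :=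
  Matrix.of fun p q => (IdA A * Zeps n ε) p ⟨(q : ℕ), by have := q.isLt; omega⟩

/-- Second block `Y₂(ε)` of `[Id_n | A] · Z(ε)`. -/
def Y2 {n : ℕ} (A : Matrix (Fin n) (Fin n) ℝ) (ε : ℝ) : Matrix (Fin n) (Fin n) ℝ :=
  Matrix.of fun p q => (IdA A * Zeps n ε) p ⟨n + (q : ℕ), by have := q.isLt; omega⟩

/-- The simple generators `s_i` of the Weyl group `W` of `SO(2n)`, as permutations of
`{1,…,2n}` (0-based here): for `1 ≤ i ≤ n-1`, `s_i = (i,i+1)(n+i,n+i+1)`; for `i = n`,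
`s_n = (n,2n-1)(n-1,2n)`. -/
def sGen (n : ℕ) (i : ℕ) : Equiv.Perm (Fin (2 * n)) :=
  if h : 1 ≤ i ∧ i ≤ n - 1 ∧ 2 ≤ n then
    Equiv.swap ⟨i - 1, by omega⟩ ⟨i, by omega⟩ *
      Equiv.swap ⟨n + i - 1, by omega⟩ ⟨n + i, by omega⟩
  else if h2 : i = n ∧ 2 ≤ n then
    Equiv.swap ⟨n - 1, by omega⟩ ⟨2 * n - 2, by omega⟩ *
      Equiv.swap ⟨n - 2, by omega⟩ ⟨2 * n - 1, by omega⟩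
  else 1

/-- Membership in the Weyl group `W`: `σ(n+i) ≡ n + σ(i) (mod 2n)` for all `1 ≤ i ≤ n`,
and the number of `i ∈ {1,…,n}` with `σ(i) > n` is even. (All positions are 0-based; a
0-based value `v` corresponds to the 1-based value `v+1`.) -/
def inW (n : ℕ) (σ : Equiv.Perm (Fin (2 * n))) : Prop :=
  (∀ i : Fin n,
    ((σ ⟨n + (i : ℕ), by have := i.isLt; omega⟩ : Fin (2 * n)) : ℕ)
      ≡ n + ((σ ⟨(i : ℕ), by have := i.isLt; omega⟩ : Fin (2 * n)) : ℕ) [MOD 2 * n]) ∧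
  Even (Finset.univ.filter (fun i : Fin n =>
    n ≤ ((σ ⟨(i : ℕ), by have := i.isLt; omega⟩ : Fin (2 * n)) : ℕ))).card

/-- `I_w = {i ∈ {1,…,n} : w(i) > n}`, as a finset of `Fin n` (0-based). -/
def Iset (n : ℕ) (σ : Equiv.Perm (Fin (2 * n))) : Finset (Fin n) :=
  Finset.univ.filter (fun i : Fin n =>
    n ≤ ((σ ⟨(i : ℕ), by have := i.isLt; omega⟩ : Fin (2 * n)) : ℕ))

/-- The parabolic subgroup `W_{[n-1]}` generated by `s_1, …, s_{n-1}`. -/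
def Wpar (n : ℕ) : Subgroup (Equiv.Perm (Fin (2 * n))) :=
  Subgroup.closure { σ | ∃ i, 1 ≤ i ∧ i ≤ n - 1 ∧ σ = sGen n i }

/-- The standard basis vector `e_i` of `ℝ^{2n}` (with `i : Fin n` 0-based, sitting in
position `i` of the first block). -/
def evec (n : ℕ) (i : Fin n) : Fin (2 * n) → ℝ :=
  Pi.single ⟨(i : ℕ), by have := i.isLt; omega⟩ 1

/-- The standard basis vector `f_j` of `ℝ^{2n}` (position `n + j`). -/
def fvec (n : ℕ) (j : Fin n) : Fin (2 * n) → ℝ :=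
  Pi.single ⟨n + (j : ℕ), by have := j.isLt; omega⟩ 1

/-- `f = ι(f_1)⋯ι(f_n)` in the Clifford algebra. -/
def fElt {n : ℕ} (Q : QuadraticForm ℝ (Fin (2 * n) → ℝ)) : CliffordAlgebra Q :=
  (List.ofFn (fun j : Fin n => CliffordAlgebra.ι Q (fvec n j))).prod

/-- `e_S = ι(e_{l_1})⋯ι(e_{l_s})` where `l_1 < ⋯ < l_s` enumerates `S`. -/
def eProd {n : ℕ} (Q : QuadraticForm ℝ (Fin (2 * n) → ℝ)) (S : Finset (Fin n)) :
    CliffordAlgebra Q :=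
  ((S.sort (· ≤ ·)).map (fun l => CliffordAlgebra.ι Q (evec n l))).prod

/-- `h = Π_{i=1}^n ι(e_i + Σ_j A_{ij} f_j)` (product in increasing order of `i`). -/
def hElt {n : ℕ} (Q : QuadraticForm ℝ (Fin (2 * n) → ℝ)) (A : Matrix (Fin n) (Fin n) ℝ) :
    CliffordAlgebra Q :=
  (List.ofFn (fun i : Fin n =>
    CliffordAlgebra.ι Q (evec n i + ∑ j : Fin n, A i j • fvec n j))).prod

/-- The sorted list of the (1-based) elements of `S ⊆ {1,…,n}`. -/
def valsOf {n : ℕ} (S : Finset (Fin n)) : List ℕ :=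
  (S.sort (· ≤ ·)).map (fun i => (i : ℕ) + 1)

/-- The word `w_1 w_2 ⋯ w_r` where
`w_m = s_n (s_{n-2}⋯s_{i_{2m-1}}) (s_{n-1}⋯s_{i_{2m}})` and `vals` lists `i_1 < i_2 < ⋯`
(1-based); `m` is 0-based here. -/
def uWord (n r : ℕ) (vals : List ℕ) : List ℕ :=
  ((List.range r).map (fun m =>
    n :: (decRun (n - 2) (vals.getD (2 * m) 0) ++ decRun (n - 1) (vals.getD (2 * m + 1) 0)))).flatten

/-- The permutation `u = w_1 w_2 ⋯ w_r`. -/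
def uPerm (n r : ℕ) (vals : List ℕ) : Equiv.Perm (Fin (2 * n)) :=
  ((uWord n r vals).map (sGen n)).prod

/-- `L = r + Σ_{m=1}^{r} ((n-1-i_{2m-1}) + (n-i_{2m}))`. -/
def Lval (n r : ℕ) (vals : List ℕ) : ℕ :=
  r + ∑ m ∈ Finset.range r, ((n - 1 - vals.getD (2 * m) 0) + (n - vals.getD (2 * m + 1) 0))

/-!
Every generator commutes with the half-turn `x ↦ x + n` of `{0, …, 2n - 1}`, so a product of
generators is determined by its values on the first half. There the block
`s_n (s_{n-2} ⋯ s_a) (s_{n-1} ⋯ s_b)` with `a < b` removes `a` and `b`, sending them to the last two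
positions of the second half, and closes the gaps. Since the last block acts first and carries the
largest indices, induction on the number of blocks shows that `u` lowers each `x ∉ S` by the number
of elements of `S` below it; on the second half, the half-turn turns this into the statement that
the earlier blocks lower the images of `a` and `b` by the number of their own indices.

For minimality, the statistic `∑ i ∈ I_w, (n - i)` vanishes at `w = 1`, equals `L` when `I_w = S`,
and grows by at most one under right multiplication by a generator: `s_i` with `i < n` exchanges `i`
and `i + 1` in `I_w`, while `s_n` only affects the membership of `n - 1` and `n`, whose
contributions are `1` and `0`.
-/

/-- The half-turn `x ↦ x + n (mod 2n)` of `{0, …, 2n - 1}`; the elements of `W` are permutations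
commuting with it, so they are determined by their values on `{0, …, n - 1}`. -/
def halfTurn (n : ℕ) : Equiv.Perm (Fin (2 * n)) :=
  Function.Involutive.toPerm
    (fun x => ⟨if x.val < n then x.val + n else x.val - n, by split_ifs <;> omega⟩)
    (fun x => by ext; dsimp only; split_ifs <;> omega)

lemma val_halfTurn (n : ℕ) (x : Fin (2 * n)) :
    (halfTurn n x).val = if x.val < n then x.val + n else x.val - n := rfl

lemma val_swap {N : ℕ} (a b x : Fin N) : (Equiv.swap a b x).val =
    if x.val = a.val then b.val else if x.val = b.val then a.val else x.val := by
  simp only [Equiv.swap_apply_def, Fin.ext_iff]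
  split_ifs <;> rfl

lemma val_sGen_of_lt {n i : ℕ} (hi : 1 ≤ i) (hin : i < n) (x : Fin (2 * n)) :
    (sGen n i x).val = if x.val + 1 = i then i else if x.val = i then i - 1
      else if x.val + 1 = n + i then n + i else if x.val = n + i then n + i - 1 else x.val := by
  rw [sGen, dif_pos ⟨hi, by omega, by omega⟩]
  simp only [Equiv.Perm.mul_apply, val_swap]
  split_ifs <;> omega

lemma val_sGen_self {n : ℕ} (hn : 2 ≤ n) (x : Fin (2 * n)) :
    (sGen n n x).val = if x.val + 1 = n then 2 * n - 2 else if x.val = 2 * n - 2 then n - 1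
      else if x.val + 2 = n then 2 * n - 1 else if x.val = 2 * n - 1 then n - 2 else x.val := by
  rw [sGen, dif_neg (by omega), dif_pos ⟨rfl, hn⟩]
  simp only [Equiv.Perm.mul_apply, val_swap]
  split_ifs <;> omega

lemma sGen_cases (n i : ℕ) : (1 ≤ i ∧ i < n) ∨ (2 ≤ n ∧ i = n) ∨ sGen n i = 1 := by
  by_cases hlt : 1 ≤ i ∧ i ≤ n - 1 ∧ 2 ≤ n
  · exact .inl ⟨hlt.1, by omega⟩
  by_cases hself : i = n ∧ 2 ≤ n
  · exact .inr (.inl hself.symm)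
  · exact .inr (.inr (by rw [sGen, dif_neg hlt, dif_neg hself]))

lemma halfTurn_commute_sGen (n i : ℕ) : Commute (halfTurn n) (sGen n i) := by
  rcases sGen_cases n i with ⟨hi, hin⟩ | ⟨hn, rfl⟩ | hone
  · ext x
    simp only [Equiv.Perm.mul_apply, val_halfTurn, val_sGen_of_lt hi hin]
    split_ifs <;> omega
  · ext x
    simp only [Equiv.Perm.mul_apply, val_halfTurn, val_sGen_self hn]
    split_ifs <;> omega
  · exact hone ▸ Commute.one_right _

/-- The permutation `s_{l₁} s_{l₂} ⋯` spelled by a word `l₁, l₂, …` in the generators. -/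
def wordProd (n : ℕ) (l : List ℕ) : Equiv.Perm (Fin (2 * n)) := (l.map (sGen n)).prod

lemma wordProd_nil (n : ℕ) : wordProd n [] = 1 := rfl

lemma wordProd_singleton (n i : ℕ) : wordProd n [i] = sGen n i := by simp [wordProd]

lemma wordProd_append (n : ℕ) (l l' : List ℕ) :
    wordProd n (l ++ l') = wordProd n l * wordProd n l' := by
  simp [wordProd]

lemma wordProd_cons (n i : ℕ) (l : List ℕ) :
    wordProd n (i :: l) = sGen n i * wordProd n l := by
  simp [wordProd]

lemma wordProd_halfTurn (n : ℕ) (l : List ℕ) (x : Fin (2 * n)) :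
    wordProd n l (halfTurn n x) = halfTurn n (wordProd n l x) := by
  have hcomm : Commute (halfTurn n) (wordProd n l) :=
    Commute.list_prod_right _ _ (by simp [halfTurn_commute_sGen])
  exact (DFunLike.congr_fun hcomm.eq x).symm

lemma length_decRun (a b : ℕ) : (decRun a b).length = a + 1 - b := by
  simp [decRun]

lemma decRun_succ_self (a : ℕ) : decRun a (a + 1) = [] := by
  simp [decRun]

lemma decRun_eq_append {a b : ℕ} (hba : b ≤ a) : decRun a b = decRun a (b + 1) ++ [b] := by
  rw [decRun, Nat.succ_sub hba, List.range'_succ, List.reverse_cons, decRun, Nat.succ_sub_succ]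

lemma val_wordProd_decRun {n a b : ℕ} (ha : a < n) (hb : 1 ≤ b) (hba : b ≤ a + 1)
    {x : Fin (2 * n)} (hx : x.val < n) :
    (wordProd n (decRun a b) x).val =
      if x.val + 1 = b then a else if b ≤ x.val ∧ x.val ≤ a then x.val - 1 else x.val := by
  induction hba using Nat.decreasingInduction generalizing x with
  | self =>
    rw [decRun_succ_self, wordProd_nil, Equiv.Perm.one_apply]
    split_ifs <;> omega
  | of_succ b hba ih =>
    have hsx := val_sGen_of_lt hb (by omega) x
    have hsx_lt : (sGen n b x).val < n := by split_ifs at hsx <;> omega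
    rw [decRun_eq_append (by omega), wordProd_append, wordProd_singleton, Equiv.Perm.mul_apply,
      ih (by omega) hsx_lt, hsx]
    split_ifs <;> omega

/-- The word of the factor `w_m = s_n (s_{n-2} ⋯ s_a) (s_{n-1} ⋯ s_b)` of `u`, where
`a = i_{2m-1}` and `b = i_{2m}` are 1-based. -/
def blockWord (n a b : ℕ) : List ℕ := n :: (decRun (n - 2) a ++ decRun (n - 1) b)

lemma val_wordProd_blockWord {n a b : ℕ} (ha : 1 ≤ a) (hab : a < b) (hb : b ≤ n)
    {x : Fin (2 * n)} (hx : x.val < n) :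
    (wordProd n (blockWord n a b) x).val =
      if x.val + 1 = a then 2 * n - 1 else if x.val + 1 = b then 2 * n - 2
      else x.val - ((if a ≤ x.val then 1 else 0) + if b ≤ x.val then 1 else 0) := by
  rw [blockWord, wordProd_cons, wordProd_append, Equiv.Perm.mul_apply, Equiv.Perm.mul_apply]
  have hy := val_wordProd_decRun (b := b) (show n - 1 < n by omega) (by omega) (by omega) hx
  generalize wordProd n (decRun (n - 1) b) x = y at *
  have hy_lt : y.val < n := by split_ifs at hy <;> omega
  have hz := val_wordProd_decRun (show n - 2 < n by omega) ha (by omega) hy_lt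
  generalize wordProd n (decRun (n - 2) a) y = z at *
  rw [val_sGen_self (by omega)]
  split_ifs at hy <;> split_ifs at hz <;> split_ifs <;> omega

lemma uWord_succ (n k : ℕ) (vals : List ℕ) :
    uWord n (k + 1) vals = uWord n k vals ++
      blockWord n (vals.getD (2 * k) 0) (vals.getD (2 * k + 1) 0) := by
  simp [uWord, List.range_succ, blockWord]

lemma uPerm_eq_wordProd (n k : ℕ) (vals : List ℕ) : uPerm n k vals = wordProd n (uWord n k vals) :=
  rfl

lemma uPerm_zero (n : ℕ) (vals : List ℕ) : uPerm n 0 vals = 1 := rfl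

lemma uPerm_succ_apply (n k : ℕ) (vals : List ℕ) (x : Fin (2 * n)) :
    uPerm n (k + 1) vals x = uPerm n k vals
      (wordProd n (blockWord n (vals.getD (2 * k) 0) (vals.getD (2 * k + 1) 0)) x) := by
  rw [uPerm_eq_wordProd, uWord_succ, wordProd_append, Equiv.Perm.mul_apply, uPerm_eq_wordProd]

lemma length_uWord {n : ℕ} (hn : 2 ≤ n) (k : ℕ) (vals : List ℕ) :
    (uWord n k vals).length = Lval n k vals := by
  induction k with
  | zero => simp [uWord, Lval]
  | succ k ih =>
    rw [uWord_succ, List.length_append, ih, blockWord, Lval, Lval, Finset.sum_range_succ]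
    simp only [List.length_cons, List.length_append, length_decRun]
    omega

lemma mem_Iset {n : ℕ} {σ : Equiv.Perm (Fin (2 * n))} {j : Fin n} :
    j ∈ Iset n σ ↔ n ≤ (σ ⟨j, by omega⟩).val := by
  simp [Iset]

/-- `f 0 < f 1 < ⋯ < f (N - 1)` are elements of `{1, …, n}`: the indices `i_1 < ⋯ < i_N` of the
word for `u`, shifted so that `f m = i_{m+1}`. -/
structure IsIndexSeq (n N : ℕ) (f : ℕ → ℕ) : Prop where
  lt : ∀ ⦃i j : ℕ⦄, i < j → j < N → f i < f j
  pos : ∀ ⦃i : ℕ⦄, i < N → 1 ≤ f i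
  le : ∀ ⦃i : ℕ⦄, i < N → f i ≤ n

lemma IsIndexSeq.mono {n N N' : ℕ} {f : ℕ → ℕ} (h : IsIndexSeq n N f) (hN : N' ≤ N) :
    IsIndexSeq n N' f where
  lt _ _ hij hj := h.lt hij (hj.trans_le hN)
  pos _ hi := h.pos (hi.trans_le hN)
  le _ hi := h.le (hi.trans_le hN)

section Values

variable {n k : ℕ} {vals : List ℕ} {x : Fin (2 * n)}

lemma val_uPerm_add_count (h : IsIndexSeq n (2 * k) (vals.getD · 0)) (hx : x.val < n)
    (hne : ∀ m < 2 * k, vals.getD m 0 ≠ x.val + 1) :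
    (uPerm n k vals x).val + Nat.count (vals.getD · 0 ≤ x.val) (2 * k) = x.val := by
  induction k generalizing x with
  | zero => simp [uPerm_zero]
  | succ k ih =>
    have hlt : ∀ m < 2 * k, vals.getD m 0 < vals.getD (2 * k) 0 := fun m hm => h.lt hm (by omega)
    have hab : vals.getD (2 * k) 0 < vals.getD (2 * k + 1) 0 := h.lt (by omega) (by omega)
    have ha : 1 ≤ vals.getD (2 * k) 0 := h.pos (by omega)
    have hxa := hne (2 * k) (by omega)
    have hxb := hne (2 * k + 1) (by omega)
    have hy := val_wordProd_blockWord ha hab (h.le (by omega)) hx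
    rw [if_neg hxa.symm, if_neg hxb.symm] at hy
    rw [uPerm_succ_apply, Nat.mul_succ, Nat.count_succ, Nat.count_succ]
    generalize wordProd n _ x = y at *
    have hyne : ∀ m < 2 * k, vals.getD m 0 ≠ y.val + 1 := by
      intro m hm
      have := hlt m hm
      have := hne m (by omega)
      split_ifs at hy <;> omega
    -- If the block moves `x`, then all earlier indices lie below both `x` and its image.
    have hcount : Nat.count (vals.getD · 0 ≤ y.val) (2 * k) =
        Nat.count (vals.getD · 0 ≤ x.val) (2 * k) := by
      simp only [Nat.count_eq_card_filter_range]
      refine congrArg _ (Finset.filter_congr fun m hm => ?_)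
      have := hlt m (Finset.mem_range.1 hm)
      split_ifs at hy <;> omega
    have hval := ih (h.mono (by omega)) (by split_ifs at hy <;> omega) hyne
    split_ifs at hy ⊢ <;> omega

lemma val_uPerm_of_forall_le (h : IsIndexSeq n (2 * k) (vals.getD · 0)) (hx : x.val < n)
    (hle : ∀ m < 2 * k, vals.getD m 0 ≤ x.val) :
    (uPerm n k vals x).val + 2 * k = x.val := by
  have hval := val_uPerm_add_count h hx fun m hm => (Nat.lt_succ_of_le (hle m hm)).ne
  rwa [Nat.count_iff_forall.2 hle] at hval

lemma val_uPerm_of_forall_add_le (h : IsIndexSeq n (2 * k) (vals.getD · 0)) (hx : n ≤ x.val)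
    (hle : ∀ m < 2 * k, vals.getD m 0 + n ≤ x.val) :
    (uPerm n k vals x).val + 2 * k = x.val := by
  obtain ⟨y, rfl⟩ := (halfTurn n).surjective x
  rw [val_halfTurn] at hx hle ⊢
  have hy : y.val < n := by split_ifs at hx <;> omega
  simp only [if_pos hy, Nat.add_le_add_iff_right] at hle ⊢
  have hval := val_uPerm_of_forall_le h hy hle
  rw [uPerm_eq_wordProd] at hval ⊢
  rw [wordProd_halfTurn, val_halfTurn]
  split_ifs <;> omega

lemma val_uPerm_of_eq_getD (h : IsIndexSeq n (2 * k) (vals.getD · 0)) {m : ℕ} (hm : m < 2 * k)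
    (hx : x.val + 1 = vals.getD m 0) :
    (uPerm n k vals x).val = 2 * n - (m + 1) := by
  induction k with
  | zero => omega
  | succ k ih =>
    have hlt : ∀ m < 2 * k, vals.getD m 0 < vals.getD (2 * k) 0 := fun m hm => h.lt hm (by omega)
    have hab : vals.getD (2 * k) 0 < vals.getD (2 * k + 1) 0 := h.lt (by omega) (by omega)
    have ha : 1 ≤ vals.getD (2 * k) 0 := h.pos (by omega)
    have hb : vals.getD (2 * k + 1) 0 ≤ n := h.le (by omega)
    have hxn : x.val + 1 ≤ n := hx ▸ h.le hm
    have hy := val_wordProd_blockWord ha hab hb hxn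
    rw [uPerm_succ_apply]
    generalize wordProd n _ x = y at *
    rcases lt_or_ge m (2 * k) with hmk | hmk
    · have hyx : y = x := by
        have := hlt m hmk
        ext
        split_ifs at hy <;> omega
      exact hyx ▸ ih (h.mono (by omega)) hmk
    · have hyval : y.val = 2 * n - 1 - (m - 2 * k) := by
        obtain rfl | rfl : m = 2 * k ∨ m = 2 * k + 1 := by omega
        all_goals split_ifs at hy <;> omega
      have hval := val_uPerm_of_forall_add_le (k := k) (x := y) (h.mono (by omega))
        (by omega) fun m hm => by have := hlt m hm; omega
      omega

end Values

section Subset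

variable {n r : ℕ} (S : Finset (Fin n))

lemma valsOf_getD {m : ℕ} (hm : m < S.card) :
    (valsOf S).getD m 0 = (S.orderEmbOfFin rfl ⟨m, hm⟩ : ℕ) + 1 := by
  -- `valsOf` contains a monadic coercion `List (Fin n) → List ℕ`, which unfolds to a `flatMap`.
  simp [valsOf, Finset.orderEmbOfFin_apply, hm, ← List.map_eq_flatMap]

lemma isIndexSeq_valsOf : IsIndexSeq n S.card ((valsOf S).getD · 0) where
  lt i j hij hj := by
    simp only [valsOf_getD S (hij.trans hj), valsOf_getD S hj, Nat.add_lt_add_iff_right]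
    exact (S.orderEmbOfFin rfl).strictMono hij
  pos i hi := by simp only [valsOf_getD S hi, Nat.le_add_left]
  le i hi := by simp only [valsOf_getD S hi, Nat.succ_le_iff, Fin.is_lt]

lemma sum_range_valsOf_getD {M : Type*} [AddCommMonoid M] (f : ℕ → M) :
    ∑ m ∈ Finset.range S.card, f ((valsOf S).getD m 0) = ∑ j ∈ S, f (j + 1) := by
  rw [Finset.sum_range, ← Finset.sum_coe_sort S, ← (S.orderIsoOfFin rfl).toEquiv.sum_comp]
  exact Finset.sum_congr rfl fun l _ => by rw [valsOf_getD S l.isLt]; rfl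

lemma count_valsOf_getD_le (x : ℕ) :
    Nat.count ((valsOf S).getD · 0 ≤ x) S.card = (S.filter (·.val < x)).card := by
  rw [Nat.count_eq_card_filter_range, Finset.card_filter, Finset.card_filter]
  exact sum_range_valsOf_getD S fun v => if v ≤ x then 1 else 0

lemma card_filter_lt_orderEmbOfFin {α : Type*} [LinearOrder α] (T : Finset α) (l : Fin T.card) :
    (T.filter (· < T.orderEmbOfFin rfl l)).card = l :=
  calc (T.filter (· < T.orderEmbOfFin rfl l)).card
      = ((Finset.univ.map (T.orderEmbOfFin rfl).toEmbedding).filter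
          (· < T.orderEmbOfFin rfl l)).card := by rw [T.map_orderEmbOfFin_univ rfl]
    _ = (Finset.Iio l).card := by
        rw [Finset.filter_map, Finset.card_map]
        congr 1
        ext
        simp
    _ = l := Fin.card_Iio l

lemma card_filter_lt_add_card_compl_filter_lt (x : Fin n) :
    (S.filter (· < x)).card + (Sᶜ.filter (· < x)).card = x := by
  rw [← Finset.card_union_of_disjoint (Finset.disjoint_filter_filter disjoint_compl_right),
    ← Finset.filter_union, Finset.union_compl, Finset.filter_gt_eq_Iio, Fin.card_Iio]

variable {S}

lemma val_uPerm_valsOf_of_notMem (hS : S.card = 2 * r) {x : Fin n} (hx : x ∉ S) :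
    (uPerm n r (valsOf S) ⟨x, by omega⟩).val + (S.filter (· < x)).card = x := by
  have hne : ∀ m < 2 * r, (valsOf S).getD m 0 ≠ x.val + 1 := by
    intro m hm heq
    rw [valsOf_getD S (hS ▸ hm), Nat.add_right_cancel_iff, Fin.val_inj] at heq
    exact hx (heq ▸ S.orderEmbOfFin_mem rfl _)
  have hval := val_uPerm_add_count (hS ▸ isIndexSeq_valsOf S) (x := ⟨x, by omega⟩) x.isLt
    hne
  rwa [← hS, count_valsOf_getD_le] at hval

lemma val_uPerm_valsOf_orderEmbOfFin (hS : S.card = 2 * r) (l : Fin S.card) :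
    (uPerm n r (valsOf S) ⟨S.orderEmbOfFin rfl l, by omega⟩).val = 2 * n - (l + 1) :=
  val_uPerm_of_eq_getD (hS ▸ isIndexSeq_valsOf S) (hS ▸ l.isLt) (valsOf_getD S l.isLt).symm

lemma val_uPerm_valsOf_compl_orderEmbOfFin (hS : S.card = 2 * r) (l : Fin Sᶜ.card) :
    (uPerm n r (valsOf S) ⟨Sᶜ.orderEmbOfFin rfl l, by omega⟩).val = l := by
  have hval := val_uPerm_valsOf_of_notMem hS (Finset.mem_compl.1 (Sᶜ.orderEmbOfFin_mem rfl l))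
  have hsplit := card_filter_lt_add_card_compl_filter_lt S (Sᶜ.orderEmbOfFin rfl l)
  rw [card_filter_lt_orderEmbOfFin] at hsplit
  omega

lemma Iset_uPerm_valsOf (hS : S.card = 2 * r) : Iset n (uPerm n r (valsOf S)) = S := by
  ext x
  rw [mem_Iset]
  by_cases hx : x ∈ S
  · obtain ⟨l, rfl⟩ : ∃ l, S.orderEmbOfFin rfl l = x := by
      rw [← Set.mem_range, S.range_orderEmbOfFin]; exact hx
    have := card_finset_fin_le S
    simp only [val_uPerm_valsOf_orderEmbOfFin hS, hx, iff_true]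
    omega
  · have := val_uPerm_valsOf_of_notMem hS hx
    simp only [hx, iff_false]
    omega

end Subset

/-- The length of the minimal representative of the coset in `W_{[n-1]} \ W` indexed by `T`:
since `j.rev = n - 1 - j` for the 0-based `j : Fin n`, this is the sum of `n - i` over the
1-based elements `i` of `T`. -/
def cosetLength {n : ℕ} (T : Finset (Fin n)) : ℕ := ∑ j ∈ T, (j.rev : ℕ)

lemma cosetLength_map_swap_le {n : ℕ} {a b : Fin n} (hab : b.val = a.val + 1)
    (T : Finset (Fin n)) :
    cosetLength (T.map (Equiv.swap a b).toEmbedding) ≤ cosetLength T + 1 :=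
  calc cosetLength (T.map (Equiv.swap a b).toEmbedding)
      = ∑ j ∈ T, ((Equiv.swap a b j).rev : ℕ) := Finset.sum_map _ _ _
    _ ≤ ∑ j ∈ T, ((j.rev : ℕ) + if j = b then 1 else 0) := by
        refine Finset.sum_le_sum fun j _ => ?_
        simp only [Fin.val_rev, val_swap, Fin.ext_iff]
        split_ifs <;> omega
    _ ≤ cosetLength T + 1 := by
        rw [Finset.sum_add_distrib, Finset.sum_ite_eq', cosetLength]
        split_ifs <;> omega

lemma cosetLength_le_of_subset_union {n : ℕ} {T T' U : Finset (Fin n)} (hsub : T ⊆ T' ∪ U) :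
    cosetLength T ≤ cosetLength T' + cosetLength U :=
  calc cosetLength T ≤ cosetLength (T' ∪ U) := Finset.sum_le_sum_of_subset hsub
    _ ≤ cosetLength (T' ∪ U) + cosetLength (T' ∩ U) := Nat.le_add_right _ _
    _ = cosetLength T' + cosetLength U := Finset.sum_union_inter

lemma Iset_one (n : ℕ) : Iset n 1 = ∅ := by
  ext j
  simp [mem_Iset]

lemma Iset_mul_sGen_of_lt {n i : ℕ} (hi : 1 ≤ i) (hin : i < n) (σ : Equiv.Perm (Fin (2 * n))) :
    Iset n (σ * sGen n i) =
      (Iset n σ).map (Equiv.swap ⟨i - 1, by omega⟩ ⟨i, hin⟩).toEmbedding := by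
  ext j
  have hs : sGen n i ⟨j, by omega⟩ =
      ⟨Equiv.swap (⟨i - 1, by omega⟩ : Fin n) ⟨i, hin⟩ j, by omega⟩ := by
    ext
    simp only [val_sGen_of_lt hi hin, val_swap]
    split_ifs <;> omega
  rw [Finset.mem_map_equiv, Equiv.symm_swap, mem_Iset, mem_Iset, Equiv.Perm.mul_apply, hs]

lemma Iset_mul_sGen_self_subset {n : ℕ} (hn : 2 ≤ n) (σ : Equiv.Perm (Fin (2 * n))) :
    Iset n (σ * sGen n n) ⊆ Iset n σ ∪ {⟨n - 2, by omega⟩, ⟨n - 1, by omega⟩} := by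
  intro j hj
  by_cases hjn : j.val + 2 < n
  · have hs : sGen n n ⟨j, by omega⟩ = ⟨j, by omega⟩ := by
      ext
      simp only [val_sGen_self hn]
      split_ifs <;> omega
    rw [mem_Iset, Equiv.Perm.mul_apply, hs] at hj
    exact Finset.mem_union_left _ (mem_Iset.2 hj)
  · refine Finset.mem_union_right _ ?_
    simp only [Finset.mem_insert, Finset.mem_singleton, Fin.ext_iff]
    omega

lemma cosetLength_Iset_mul_sGen_le (n i : ℕ) (σ : Equiv.Perm (Fin (2 * n))) :
    cosetLength (Iset n (σ * sGen n i)) ≤ cosetLength (Iset n σ) + 1 := by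
  rcases sGen_cases n i with ⟨hi, hin⟩ | ⟨hn, rfl⟩ | hone
  · rw [Iset_mul_sGen_of_lt hi hin]
    exact cosetLength_map_swap_le (Nat.sub_add_cancel hi).symm _
  · have hpair : cosetLength {(⟨i - 2, by omega⟩ : Fin i), ⟨i - 1, by omega⟩} = 1 := by
      rw [cosetLength, Finset.sum_pair (by rw [Ne, Fin.ext_iff]; dsimp only; omega)]
      simp only [Fin.val_rev]
      omega
    exact hpair ▸ cosetLength_le_of_subset_union (Iset_mul_sGen_self_subset hn σ)
  · rw [hone, mul_one]
    exact Nat.le_succ _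

lemma cosetLength_Iset_wordProd_le (n : ℕ) (l : List ℕ) :
    cosetLength (Iset n (wordProd n l)) ≤ l.length := by
  induction l using List.reverseRecOn with
  | nil => simp [wordProd_nil, Iset_one, cosetLength]
  | append_singleton l i ih =>
    rw [wordProd_append, wordProd_singleton, List.length_append, List.length_singleton]
    exact (cosetLength_Iset_mul_sGen_le n i _).trans (Nat.add_le_add_right ih 1)

lemma Lval_eq_sum {n r : ℕ} {vals : List ℕ} (hlt : ∀ m < r, vals.getD (2 * m) 0 < n) :
    Lval n r vals = ∑ m ∈ Finset.range (2 * r), (n - vals.getD m 0) := by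
  induction r with
  | zero => simp [Lval]
  | succ r ih =>
    have := hlt r r.lt_succ_self
    rw [Nat.mul_succ, Finset.sum_range_succ, Finset.sum_range_succ,
      ← ih fun m hm => hlt m (by omega), Lval, Lval, Finset.sum_range_succ]
    omega

lemma Lval_valsOf {n r : ℕ} {S : Finset (Fin n)} (hS : S.card = 2 * r) :
    Lval n r (valsOf S) = cosetLength S := by
  have hlt : ∀ m < r, (valsOf S).getD (2 * m) 0 < n := fun m hm =>
    ((isIndexSeq_valsOf S).lt (Nat.lt_succ_self _) (by omega)).trans_le
      ((isIndexSeq_valsOf S).le (by omega))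
  rw [Lval_eq_sum hlt, ← hS, sum_range_valsOf_getD S (n - ·), cosetLength]
  simp only [Fin.val_rev]

/-- For a nonempty even subset `S = {i_1 < ⋯ < i_{2r}}` of `{1,…,n}`,
the word `u = w_1 ⋯ w_r` with `w_m = s_n (s_{n-2}⋯s_{i_{2m-1}}) (s_{n-1}⋯s_{i_{2m}})`
satisfies: (a) `I_u = S`; (b) `u` sends the complement of `S` in increasing order to
`1, …, n-2r` and sends `i_m` to `2n-m+1`; (c) the word has exactly
`L = r + Σ_m ((n-1-i_{2m-1}) + (n-i_{2m}))` letters, and every expression of any `v ∈ W`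
with `I_v = S` in the generators `s_1, …, s_n` has at least `L` factors. -/
theorem minimal_coset_representative_word (n r : ℕ) (hn : 2 ≤ n) (hr : 1 ≤ r)
    (S : Finset (Fin n)) (hS : S.card = 2 * r) :
    Iset n (uPerm n r (valsOf S)) = S ∧
    (∀ l : Fin (Sᶜ.card),
      ((uPerm n r (valsOf S))
        ⟨((Sᶜ.orderIsoOfFin rfl l : Fin n) : ℕ),
          by have := (Sᶜ.orderIsoOfFin rfl l : Fin n).isLt; omega⟩ : Fin (2 * n)).val
        = (l : ℕ)) ∧
    (∀ l : Fin S.card,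
      ((uPerm n r (valsOf S))
        ⟨((S.orderIsoOfFin rfl l : Fin n) : ℕ),
          by have := (S.orderIsoOfFin rfl l : Fin n).isLt; omega⟩ : Fin (2 * n)).val
        = 2 * n - ((l : ℕ) + 1)) ∧
    (uWord n r (valsOf S)).length = Lval n r (valsOf S) ∧
    (∀ v : Equiv.Perm (Fin (2 * n)), inW n v → Iset n v = S →
      ∀ ls : List ℕ, (∀ i ∈ ls, 1 ≤ i ∧ i ≤ n) → (ls.map (sGen n)).prod = v →
        Lval n r (valsOf S) ≤ ls.length) := by
  refine ⟨Iset_uPerm_valsOf hS, val_uPerm_valsOf_compl_orderEmbOfFin hS,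
    val_uPerm_valsOf_orderEmbOfFin hS, length_uWord hn r _, ?_⟩
  rintro v - hv ls - rfl
  rw [Lval_valsOf hS, ← hv]
  exact cosetLength_Iset_wordProd_le n ls
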